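/- Let K be a field of characteristic zero and p : ℕ → K[X] with deg(p n) = n for all n. Let L : K[X] → K[X] be a linear map satisfying: (i) L(p 0) = 0 and L(p (n+1)) = p n for all n; (ii) L commutes with every translation, i.e. L(f(X + y)) = (L f)(X + y) for all f ∈ K[X] and y ∈ K; (iii) (p n)(0) = δ_{0n}. Then every translation can be expressed through powers of the delta operator L: for every f ∈ K[X] and y ∈ K, f(X + y) = Σ_{k=0}^{deg f} (p k)(y) · (L^k f). -/

import Mathlib

open Polynomial

/-!
The functionals `q ↦ (L ^ k q)(0)` are dual to the `p k`, so any polynomial `q` is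
`∑ₖ (L ^ k q)(0) • p k`. If `T` commutes with `L`, applying this to `T (p n)`, where
`L ^ k (T (p n)) = T (p (n - k))`, and reversing the sum gives
`T (p n) = ∑ₖ (T (p k))(0) • L ^ k (p n)`. Both sides are linear in `p n`, so every polynomial can
take its place; for `T` the translation by `y`, the coefficient `(T (p k))(0)` is `p k` at `y`.
-/

/-- The sequence `p` is basic for the operator `L` and the normalising functional `ε`: `L` moves
`p` one step down and kills `p 0`, while `ε (p n) = δ_{0n}`. For a delta operator on polynomials
`ε` is evaluation at `0`; an arbitrary module is allowed since the duality between `p` and the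
functionals `ε ∘ L ^ k` is pure linear algebra. -/
structure IsBasicSequence {R M : Type*} [CommSemiring R] [AddCommMonoid M] [Module R M]
    (L : Module.End R M) (ε : M →ₗ[R] R) (p : ℕ → M) : Prop where
  apply_zero : L (p 0) = 0
  apply_succ (n : ℕ) : L (p (n + 1)) = p n
  functional_apply (n : ℕ) : ε (p n) = if n = 0 then 1 else 0

namespace IsBasicSequence

variable {R M : Type*} [CommSemiring R] [AddCommMonoid M] [Module R M]
  {L T : Module.End R M} {ε : M →ₗ[R] R} {p : ℕ → M}

theorem pow_apply (h : IsBasicSequence L ε p) (k n : ℕ) :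
    (L ^ k) (p n) = if k ≤ n then p (n - k) else 0 := by
  induction k generalizing n with
  | zero => simp
  | succ k ih =>
    rw [pow_succ, Module.End.mul_apply]
    cases n with
    | zero => simp [h.apply_zero]
    | succ n => simp [h.apply_succ, ih]

theorem functional_pow_apply (h : IsBasicSequence L ε p) (k n : ℕ) :
    ε ((L ^ k) (p n)) = if n = k then 1 else 0 := by
  rw [h.pow_apply]
  split_ifs with hkn hnk hnk
  · simp [hnk, h.functional_apply]
  · rw [h.functional_apply, if_neg (by omega)]
  · omega
  · exact map_zero ε

theorem functional_pow_finsuppSum (h : IsBasicSequence L ε p) (c : ℕ →₀ R) (k : ℕ) :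
    ε ((L ^ k) (c.sum fun n a ↦ a • p n)) = c k := by
  simp [map_finsuppSum, h.functional_pow_apply]

theorem eq_sum_of_functional_pow_eq_zero (h : IsBasicSequence L ε p) {q : M}
    (hq : q ∈ Submodule.span R (Set.range p)) {N : ℕ} (hN : ∀ k, N ≤ k → ε ((L ^ k) q) = 0) :
    q = ∑ k ∈ Finset.range N, ε ((L ^ k) q) • p k := by
  obtain ⟨c, rfl⟩ := Finsupp.mem_span_range_iff_exists_finsupp.mp hq
  simp only [h.functional_pow_finsuppSum] at hN ⊢
  have support_subset : c.support ⊆ Finset.range N := fun k hk ↦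
    Finset.mem_range.mpr (not_le.mp fun hNk ↦ Finsupp.mem_support_iff.mp hk (hN k hNk))
  exact Finsupp.sum_of_support_subset c support_subset _ fun _ _ ↦ zero_smul R _

theorem apply_basic_eq_sum_of_commute (h : IsBasicSequence L ε p)
    (hspan : Submodule.span R (Set.range p) = ⊤) (hT : Commute L T) (n : ℕ) :
    T (p n) = ∑ k ∈ Finset.range (n + 1), ε (T (p k)) • (L ^ k) (p n) := by
  have pow_T_apply (k : ℕ) : (L ^ k) (T (p n)) = T ((L ^ k) (p n)) :=
    LinearMap.congr_fun (hT.pow_left k) (p n)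
  have vanishing (k : ℕ) (hk : n + 1 ≤ k) : ε ((L ^ k) (T (p n))) = 0 := by
    rw [pow_T_apply, h.pow_apply, if_neg (by omega), map_zero, map_zero]
  calc T (p n)
      = ∑ k ∈ Finset.range (n + 1), ε ((L ^ k) (T (p n))) • p k :=
        h.eq_sum_of_functional_pow_eq_zero (hspan ▸ Submodule.mem_top) vanishing
    _ = ∑ k ∈ Finset.range (n + 1), ε (T (p (n - k))) • p k :=
        Finset.sum_congr rfl fun k hk ↦ by
          rw [pow_T_apply, h.pow_apply, if_pos (Finset.mem_range_succ_iff.mp hk)]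
    _ = ∑ k ∈ Finset.range (n + 1), ε (T (p k)) • p (n - k) := by
        rw [← Finset.sum_flip]
        exact Finset.sum_congr rfl fun k hk ↦ by
          rw [Nat.sub_sub_self (Finset.mem_range_succ_iff.mp hk)]
    _ = ∑ k ∈ Finset.range (n + 1), ε (T (p k)) • (L ^ k) (p n) :=
        Finset.sum_congr rfl fun k hk ↦ by
          rw [h.pow_apply, if_pos (Finset.mem_range_succ_iff.mp hk)]

/-- Rota's first expansion theorem. -/
theorem apply_eq_sum_of_commute (h : IsBasicSequence L ε p)
    (hspan : Submodule.span R (Set.range p) = ⊤) (hT : Commute L T) {N : ℕ} {q : M}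
    (hq : q ∈ Submodule.span R (p '' Set.Iio N)) :
    T q = ∑ k ∈ Finset.range N, ε (T (p k)) • (L ^ k) q := by
  let expansion : Module.End R M := ∑ k ∈ Finset.range N, ε (T (p k)) • L ^ k
  suffices Set.EqOn T expansion (p '' Set.Iio N) by
    simpa [expansion] using LinearMap.eqOn_span this hq
  rintro _ ⟨n, hn, rfl⟩
  simp only [expansion, LinearMap.sum_apply, LinearMap.smul_apply]
  rw [h.apply_basic_eq_sum_of_commute hspan hT n]
  refine Finset.sum_subset (Finset.range_mono hn) fun k _ hk ↦ ?_
  rw [h.pow_apply, if_neg (by simpa using hk), smul_zero]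

end IsBasicSequence

theorem stmt_8_general {R : Type*} [CommRing R]
    (p : ℕ → R[X]) (hdeg : ∀ n : ℕ, (p n).degree = n)
    (hunit : ∀ n : ℕ, IsUnit (p n).leadingCoeff)
    (L : Module.End R R[X])
    (hL0 : L (p 0) = 0) (hL : ∀ n : ℕ, L (p (n + 1)) = p n)
    (heval : ∀ n : ℕ, (p n).eval 0 = if n = 0 then 1 else 0)
    (y : R) (hcomm : ∀ f : R[X], L (f.comp (X + C y)) = (L f).comp (X + C y)) (f : R[X]) :
    f.comp (X + C y)
      = ∑ k ∈ Finset.range (f.natDegree + 1), ((p k).eval y) • ((L ^ k) f) := by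
  let S : Polynomial.Sequence R := ⟨p, hdeg⟩
  have basic : IsBasicSequence L (leval 0) p := ⟨hL0, hL, heval⟩
  have commute_taylor : Commute L (taylor y) := LinearMap.ext hcomm
  have mem_span : f ∈ Submodule.span R (p '' Set.Iio (f.natDegree + 1)) := by
    rw [S.span_degreeLT fun n _ ↦ hunit n, mem_degreeLT]
    exact degree_le_natDegree.trans_lt (mod_cast Nat.lt_succ_self _)
  simpa [taylor_apply, leval_apply, taylor_eval] using
    basic.apply_eq_sum_of_commute (S.span hunit) commute_taylor mem_span

/-- Translations expressed through powers of the delta operator: under the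
binomial-type hypotheses, every translation satisfies
`f(X + y) = Σ_{k=0}^{deg f} p_k(y) · (L^k f)`. -/
theorem stmt_8 {K : Type*} [Field K] [CharZero K]
    (p : ℕ → K[X]) (hdeg : ∀ n : ℕ, (p n).degree = n)
    (L : Module.End K K[X])
    (hL0 : L (p 0) = 0) (hL : ∀ n : ℕ, L (p (n + 1)) = p n)
    (hcomm : ∀ (f : K[X]) (y : K),
      L (f.comp (X + C y)) = (L f).comp (X + C y))
    (heval : ∀ n : ℕ, (p n).eval 0 = if n = 0 then 1 else 0) :
    ∀ (f : K[X]) (y : K),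
      f.comp (X + C y)
        = ∑ k ∈ Finset.range (f.natDegree + 1), ((p k).eval y) • ((L ^ k) f) := by
  let S : Polynomial.Sequence K := ⟨p, hdeg⟩
  have hunit (n : ℕ) : IsUnit (p n).leadingCoeff :=
    (leadingCoeff_ne_zero.mpr (S.ne_zero n)).isUnit
  exact fun f y ↦ stmt_8_general p hdeg hunit L hL0 hL heval y (hcomm · y) f
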